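/- Let P and Q be probability measures on ℝᵈ whose characteristic functions φ_P, φ_Q are integrable, and let l : ℝᵈ → ℝ be integrable with everywhere strictly positive Fourier transform... If (φ_P * l)(t) = (φ_Q * l)(t) for all t, then the functions g·f_P = g·f_Q where g is the inverse Fourier transform of l and f_P, f_Q the densities of P, Q; in particular, since g > 0 everywhere, f_P = f_Q and hence P = Q. -/

import Mathlib

/-!
The Fourier transform turns `φ_P * l = φ_Q * l` into `𝓕 l · 𝓕 φ_P = 𝓕 l · 𝓕 φ_Q`
(`Real.fourier_mul_convolution_eq`). Up to the rescaling `x = -2πξ`, the value `𝓕 l ξ` is the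
strictly positive integral `∫ exp(i⟪w, x⟫) l(w) dw`, so it can be cancelled, giving `𝓕 φ_P = 𝓕 φ_Q`.
Characteristic functions are continuous, so Fourier inversion applied to `φ_P - φ_Q` (whose
Fourier transform vanishes, hence is integrable) gives `φ_P = φ_Q` everywhere, and a probability
measure is determined by its characteristic function. Inverting the difference avoids having to
know that `𝓕 φ_P`, which is the density of `P` up to scaling, is itself integrable.
-/

open MeasureTheory Complex
open scoped RealInnerProductSpace

open FourierTransform in
/-- Injectivity of the Fourier transform on continuous integrable functions. -/
theorem eq_of_fourier_eq_of_continuous {V : Type*} [NormedAddCommGroup V] [InnerProductSpace ℝ V]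
    [FiniteDimensional ℝ V] [MeasurableSpace V] [BorelSpace V] {f g : V → ℂ}
    (hfc : Continuous f) (hgc : Continuous g) (hf : Integrable f) (hg : Integrable g)
    (h : 𝓕 f = 𝓕 g) : f = g := by
  have hzero : 𝓕 (f - g) = 0 := by
    ext ξ
    have hi : ∀ {u : V → ℂ}, Integrable u →
        Integrable (fun v => Real.fourierChar (-⟪v, ξ⟫) • u v) :=
      fun hu => (Real.fourierIntegral_convergent_iff ξ).2 hu
    have hξ := congrFun h ξ
    simp only [Real.fourier_eq] at hξ
    simp only [Real.fourier_eq, Pi.sub_apply, smul_sub, Pi.zero_apply]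
    rw [integral_sub (hi hf) (hi hg), hξ, sub_self]
  have hinv := (hfc.sub hgc).fourierInv_fourier_eq (hf.sub hg)
    (by rw [hzero]; exact integrable_zero _ _ _)
  ext v
  have hv := congrFun hinv v
  rw [hzero] at hv
  simp only [Real.fourierInv_eq, Pi.zero_apply, smul_zero, integral_zero, Pi.sub_apply] at hv
  exact sub_eq_zero.1 hv.symm

/-- If `P` and `Q` have integrable characteristic functions and `l` is integrable with
everywhere strictly positive inverse Fourier transform, then equality of the smoothed
characteristic functions `φ_P * l = φ_Q * l` forces `P = Q`. -/
theorem smoothed_charFun_injective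
    {d : ℕ} (P Q : Measure (EuclideanSpace ℝ (Fin d)))
    [IsProbabilityMeasure P] [IsProbabilityMeasure Q]
    (φP φQ : EuclideanSpace ℝ (Fin d) → ℂ)
    (hφP : ∀ t, φP t = ∫ x, Complex.exp ((⟪t, x⟫ : ℝ) * Complex.I) ∂P)
    (hφQ : ∀ t, φQ t = ∫ x, Complex.exp ((⟪t, x⟫ : ℝ) * Complex.I) ∂Q)
    (hφPint : Integrable φP volume) (hφQint : Integrable φQ volume)
    (l : EuclideanSpace ℝ (Fin d) → ℝ) (hl : Integrable l volume)
    (hgpos : ∀ x : EuclideanSpace ℝ (Fin d),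
      ((∫ w, Complex.exp ((⟪w, x⟫ : ℝ) * Complex.I) * (l w : ℂ) ∂volume)).im = 0 ∧
      0 < ((∫ w, Complex.exp ((⟪w, x⟫ : ℝ) * Complex.I) * (l w : ℂ) ∂volume)).re)
    (hconv : ∀ t, (∫ w, φP (t - w) * (l w : ℂ) ∂volume)
                = ∫ w, φQ (t - w) * (l w : ℂ) ∂volume) :
    P = Q := by
  have hP : φP = charFun P := by
    ext t
    simp only [hφP, charFun_apply, real_inner_comm]
  have hQ : φQ = charFun Q := by
    ext t
    simp only [hφQ, charFun_apply, real_inner_comm]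
  have hPc : Continuous φP := hP ▸ continuous_charFun
  have hQc : Continuous φQ := hQ ▸ continuous_charFun
  have hlne : ∀ ξ, FourierTransform.fourier (fun w => (l w : ℂ)) ξ ≠ 0 := by
    intro ξ h0
    -- the factor `2π` and the sign reconcile Mathlib's kernel `exp(-2πi⟪w, ξ⟫)` with `exp(i⟪w, x⟫)`
    have hpos := (hgpos ((-2 * Real.pi) • ξ)).2
    simp only [Real.fourier_eq', smul_eq_mul] at h0
    simp only [real_inner_smul_right, h0, Complex.zero_re, lt_self_iff_false] at hpos
  have hcv : convolution (fun w => (l w : ℂ)) φP (ContinuousLinearMap.mul ℂ ℂ) volume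
      = convolution (fun w => (l w : ℂ)) φQ (ContinuousLinearMap.mul ℂ ℂ) volume := by
    ext t
    simpa only [convolution_def, ContinuousLinearMap.mul_apply', mul_comm] using hconv t
  have hlC : Integrable (fun w => (l w : ℂ)) volume := hl.ofReal
  refine Measure.ext_of_charFun (hP ▸ hQ ▸ ?_)
  refine eq_of_fourier_eq_of_continuous hPc hQc hφPint hφQint (funext fun ξ => ?_)
  refine mul_left_cancel₀ (hlne ξ) ?_
  rw [← Real.fourier_mul_convolution_eq hlC hφPint,
    ← Real.fourier_mul_convolution_eq hlC hφQint, hcv]
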